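/- arXiv:1309.2038 — 2 statements merged into one kernel-verified Lean document; each statement's English description precedes it below -/
import Mathlib

section
/- Under the stream setup, let I, K ⊆ E be disjoint, put B := I ∪ K, and let γ > 0. Suppose (i) C(e) ⊆ {e' ∈ B : e' < e} for every e ∈ B, (ii) {e' ∈ I : e' < e} ⊆ C(e) for every e ∈ I, and (iii) w(K) ≤ w(I)/γ. Then f(I ∪ K) ≤ (1 + 1/γ)·f(I). -/
/-!
Adding the elements of a set `S` in increasing order writes `f S - f ∅` as the sum of the gains of
the elements `e ∈ S` over their predecessors in `S`. By diminishing returns, the sum grows when each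
predecessor set is replaced by a subset and shrinks when it is replaced by a superset. With the sets
`C e`, the first comparison for `S = I ∪ K` gives `f (I ∪ K) - f ∅ ≤ w I + w K`, and the second for
`S = I` gives `w I ≤ f I - f ∅`; the bound on `w K` links the two.
-/

/-- Submodularity of a set function, required on finite sets only. -/
def IsSubmodular {α R : Type*} [DecidableEq α] [Add R] [LE R] (f : Finset α → R) : Prop :=
  ∀ A B : Finset α, f (A ∪ B) + f (A ∩ B) ≤ f A + f B

/-- The gain in `f` from adding `e` to `A`. It is zero if `e ∈ A`. The weight `w e` of a stream
element is `marginalGain f (C e) e`. -/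
def marginalGain {α R : Type*} [DecidableEq α] [Sub R] (f : Finset α → R) (A : Finset α) (e : α) :
    R :=
  f (insert e A) - f A

theorem sum_marginalGain_filter_lt {α R : Type*} [LinearOrder α] [AddCommGroup R]
    (f : Finset α → R) (S : Finset α) :
    ∑ e ∈ S, marginalGain f (S.filter (· < e)) e = f S - f ∅ := by
  induction S using Finset.induction_on_max with
  | empty => rw [Finset.sum_empty, sub_self]
  | insert a s ha ih =>
    have ha_notMem : a ∉ s := fun h => (ha a h).false
    have filter_max : (insert a s).filter (· < a) = s := by
      rw [Finset.filter_insert, if_neg (lt_irrefl a), Finset.filter_true_of_mem ha]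
    have filter_of_mem (e : α) (he : e ∈ s) :
        (insert a s).filter (· < e) = s.filter (· < e) := by
      rw [Finset.filter_insert, if_neg (ha e he).not_gt]
    calc ∑ e ∈ insert a s, marginalGain f ((insert a s).filter (· < e)) e
      _ = marginalGain f s a + ∑ e ∈ s, marginalGain f (s.filter (· < e)) e := by
        rw [Finset.sum_insert ha_notMem, filter_max,
          Finset.sum_congr rfl fun e he => by rw [filter_of_mem e he]]
      _ = f (insert a s) - f ∅ := by rw [ih, marginalGain, sub_add_sub_cancel]

namespace IsSubmodular

variable {α R : Type*} [AddCommGroup R] [PartialOrder R] [IsOrderedAddMonoid R] {f : Finset α → R}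

theorem marginalGain_le_of_subset [DecidableEq α] (hf : IsSubmodular f) {X Y : Finset α} {e : α}
    (hXY : X ⊆ Y) (he : e ∉ Y) : marginalGain f Y e ≤ marginalGain f X e := by
  have h := hf (insert e X) Y
  rw [Finset.insert_union, Finset.union_eq_right.mpr hXY,
    Finset.insert_inter_of_notMem he, Finset.inter_eq_left.mpr hXY] at h
  exact sub_le_sub_iff.mpr h

variable [LinearOrder α] {C : α → Finset α} {S : Finset α}

theorem sub_empty_le_sum_marginalGain (hf : IsSubmodular f)
    (hC : ∀ e ∈ S, C e ⊆ S.filter (· < e)) :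
    f S - f ∅ ≤ ∑ e ∈ S, marginalGain f (C e) e := by
  rw [← sum_marginalGain_filter_lt f S]
  exact Finset.sum_le_sum fun e he => hf.marginalGain_le_of_subset (hC e he) (by simp)

theorem sum_marginalGain_le_sub_empty (hf : IsSubmodular f)
    (hC : ∀ e ∈ S, S.filter (· < e) ⊆ C e) (hself : ∀ e ∈ S, e ∉ C e) :
    ∑ e ∈ S, marginalGain f (C e) e ≤ f S - f ∅ := by
  rw [← sum_marginalGain_filter_lt f S]
  exact Finset.sum_le_sum fun e he => hf.marginalGain_le_of_subset (hC e he) (hself e he)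

end IsSubmodular

theorem stmt_5_general {α R : Type*} [LinearOrder α] [Field R] [LinearOrder R]
    [IsStrictOrderedRing R] {f : Finset α → R} (hf : IsSubmodular f) (hempty : 0 ≤ f ∅)
    {C : α → Finset α} {I K : Finset α} (hdisj : Disjoint I K) {γ : R} (hγ : 0 < γ)
    (hCB : ∀ e ∈ I ∪ K, C e ⊆ (I ∪ K).filter (· < e))
    (hI : ∀ e ∈ I, I.filter (· < e) ⊆ C e)
    (hK : ∑ e ∈ K, marginalGain f (C e) e ≤ (∑ e ∈ I, marginalGain f (C e) e) / γ) :
    f (I ∪ K) ≤ (1 + 1 / γ) * f I := by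
  have hself (e : α) (he : e ∈ I) : e ∉ C e := fun h =>
    (Finset.mem_filter.mp (hCB e (Finset.mem_union_left K he) h)).2.false
  have hB := hf.sub_empty_le_sum_marginalGain hCB
  have hwI := hf.sum_marginalGain_le_sub_empty hI hself
  rw [Finset.sum_union hdisj] at hB
  set wI := ∑ e ∈ I, marginalGain f (C e) e
  set wK := ∑ e ∈ K, marginalGain f (C e) e
  calc f (I ∪ K)
    _ ≤ f ∅ + (wI + wK) := sub_le_iff_le_add'.mp hB
    _ ≤ f ∅ + (wI + wI / γ) := by gcongr
    _ = f ∅ + (1 + 1 / γ) * wI := by ring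
    _ ≤ f ∅ + (1 + 1 / γ) * (f I - f ∅) := by gcongr
    _ = (1 + 1 / γ) * f I - f ∅ / γ := by ring
    _ ≤ (1 + 1 / γ) * f I := sub_le_self _ (by positivity)

/-- Inequality (6.1) in the proof of Lemma 3.3: under the stream setup, with
`I` the output solution, `K` the killed elements, `B = I ∪ K`, and
`w(K) ≤ w(I)/γ`, we have `f(I ∪ K) ≤ (1 + 1/γ)·f(I)`, where
`w(e) := f(C(e) ∪ {e}) − f(C(e))`. -/
theorem stmt_5 {α : Type*} [Fintype α] [LinearOrder α]
    (f : Finset α → ℝ)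
    (hsub : ∀ A B : Finset α, f (A ∪ B) + f (A ∩ B) ≤ f A + f B)
    (hmono : ∀ A B : Finset α, A ⊆ B → f A ≤ f B)
    (hproper : f ∅ = 0)
    (hnonneg : ∀ A : Finset α, 0 ≤ f A)
    (C : α → Finset α)
    (hC : ∀ e, ∀ e' ∈ C e, e' < e)
    (I K : Finset α) (hdisj : Disjoint I K)
    (γ : ℝ) (hγ : 0 < γ)
    (hCB : ∀ e ∈ I ∪ K, C e ⊆ (I ∪ K).filter (fun e' => e' < e))
    (hI : ∀ e ∈ I, I.filter (fun e' => e' < e) ⊆ C e)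
    (hK : ∑ e ∈ K, (f (insert e (C e)) - f (C e))
        ≤ (∑ e ∈ I, (f (insert e (C e)) - f (C e))) / γ) :
    f (I ∪ K) ≤ (1 + 1 / γ) * f I :=
  stmt_5_general hsub hproper.ge hdisj hγ hCB hI hK
end

section
/- Under the stream setup, let I, K ⊆ E be disjoint, put B := I ∪ K, let γ > 0, F ≥ 0 and 0 ≤ c < 1 be reals, and let T ⊆ E. Suppose (i) C(e) ⊆ {e' ∈ B : e' < e} for every e ∈ E, (ii) {e' ∈ I : e' < e} ⊆ C(e) for every e ∈ I, (iii) w(K) ≤ w(I)/γ, (iv) w(T) ≤ F·w(I), and (v) f(A ∪ {e}) − f(A) ≥ (1 − c)·f({e}) for every A ⊆ E and e ∉ A. Then f(T) ≤ min{F + 1 + 1/γ, F/(1 − c)}·f(I). -/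
/-!
The weights of a stream compare with `f` through diminishing returns. Adding the elements of `I` in
stream order shows `w(I) ≤ f(I)`, as `C(e)` contains every earlier element of `I`; in the same way
`f(B) ≤ w(B)` for `B = I ∪ K`, as `C(e)` contains only earlier elements of `B`. The first bound
follows by adding `T` to `B`, where each `e ∈ T` contributes at most `w(e)`:
`f(T) ≤ f(B) + w(T) ≤ w(I) + w(K) + w(T) ≤ (1 + 1/γ + F) w(I)`. For the second, subadditivity and
curvature give `(1 - c) f(T) ≤ ∑ (1 - c) f({e}) ≤ w(T) ≤ F w(I)` directly.
-/

section Definitions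

variable {α R : Type*} [DecidableEq α]

/-- Submodularity of a set function on the finite subsets of `α`. -/
def Submodular [Add R] [LE R] (f : Finset α → R) : Prop :=
  ∀ A B : Finset α, f (A ∪ B) + f (A ∩ B) ≤ f A + f B

/-- The marginal value of `e` with respect to `A`; it is `0` when `e ∈ A`. -/
def marginal [Sub R] (f : Finset α → R) (A : Finset α) (e : α) : R :=
  f (insert e A) - f A

/-- The total weight `w(S)` of `S`, where `e` weighs its marginal value with respect to `C e`, the
set that a streaming algorithm compares `e` with on arrival. -/
def streamWeight [AddCommGroup R] (f : Finset α → R) (C : α → Finset α) (S : Finset α) : R :=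
  ∑ e ∈ S, marginal f (C e) e

end Definitions

section Marginal

variable {α R : Type*} [AddCommGroup R] {f : Finset α → R}

theorem sum_marginal_filter_lt [LinearOrder α] (f : Finset α → R) (S : Finset α) :
    ∑ e ∈ S, marginal f (S.filter (· < e)) e = f S - f ∅ := by
  induction S using Finset.induction_on_max with
  | empty => simp
  | insert a s ha ih =>
    have ha_notMem : a ∉ s := fun h => (ha a h).false
    have filter_lt_max : (insert a s).filter (· < a) = s := by
      rw [Finset.filter_insert, if_neg (lt_irrefl a), Finset.filter_true_of_mem ha]
    have filter_lt_of_mem : ∀ e ∈ s, (insert a s).filter (· < e) = s.filter (· < e) :=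
      fun e he => by rw [Finset.filter_insert, if_neg (ha e he).not_gt]
    calc ∑ e ∈ insert a s, marginal f ((insert a s).filter (· < e)) e
        = marginal f s a + ∑ e ∈ s, marginal f (s.filter (· < e)) e := by
          rw [Finset.sum_insert ha_notMem, filter_lt_max,
            Finset.sum_congr rfl fun e he => by rw [filter_lt_of_mem e he]]
      _ = f (insert a s) - f ∅ := by rw [ih, marginal, sub_add_sub_cancel]

variable [DecidableEq α] [PartialOrder R] [IsOrderedAddMonoid R]

theorem marginal_nonneg (hmono : Monotone f) (A : Finset α) (e : α) :
    0 ≤ marginal f A e :=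
  sub_nonneg.2 (hmono (Finset.subset_insert e A))

theorem streamWeight_union_le (hmono : Monotone f) (C : α → Finset α) (S T : Finset α) :
    streamWeight f C (S ∪ T) ≤ streamWeight f C S + streamWeight f C T := by
  unfold streamWeight
  rw [← Finset.sum_union_inter]
  exact le_add_of_nonneg_right (Finset.sum_nonneg fun e _ => marginal_nonneg hmono (C e) e)

namespace Submodular

theorem marginal_le_marginal (hsub : Submodular f) {A B : Finset α} {e : α} (hAB : A ⊆ B)
    (he : e ∈ B → e ∈ A) : marginal f B e ≤ marginal f A e := by
  have union_eq : insert e A ∪ B = insert e B := by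
    rw [Finset.insert_union, Finset.union_eq_right.2 hAB]
  have inter_eq : insert e A ∩ B = A := by grind
  have h := hsub (insert e A) B
  rw [union_eq, inter_eq] at h
  exact sub_le_sub_iff.2 h

theorem antitone_marginal (hsub : Submodular f) (hmono : Monotone f) (e : α) :
    Antitone (marginal f · e) := by
  intro A B hAB
  by_cases he : e ∈ B
  · calc marginal f B e = 0 := by rw [marginal, Finset.insert_eq_of_mem he, sub_self]
      _ ≤ marginal f A e := marginal_nonneg hmono A e
  · exact hsub.marginal_le_marginal hAB fun h => absurd h he

theorem union_le_add_sum_marginal (hsub : Submodular f) (B T : Finset α) :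
    f (T ∪ B) ≤ f B + ∑ e ∈ T, marginal f B e := by
  induction T using Finset.induction_on with
  | empty => simp
  | insert a s ha ih =>
    have marginal_le : marginal f (s ∪ B) a ≤ marginal f B a :=
      hsub.marginal_le_marginal Finset.subset_union_right fun h =>
        (Finset.mem_union.1 h).resolve_left ha
    calc f (insert a s ∪ B) = marginal f (s ∪ B) a + f (s ∪ B) := by
          rw [marginal, Finset.insert_union, sub_add_cancel]
      _ ≤ marginal f B a + (f B + ∑ e ∈ s, marginal f B e) := add_le_add marginal_le ih
      _ = f B + ∑ e ∈ insert a s, marginal f B e := by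
          rw [Finset.sum_insert ha, add_left_comm]

theorem le_sum_singleton (hsub : Submodular f) (hempty : f ∅ = 0) (T : Finset α) :
    f T ≤ ∑ e ∈ T, f {e} := by
  simpa [marginal, hempty] using hsub.union_le_add_sum_marginal ∅ T

theorem le_add_streamWeight (hsub : Submodular f) (hmono : Monotone f) {C : α → Finset α}
    {B T : Finset α} (hC : ∀ e ∈ T, C e ⊆ B) : f T ≤ f B + streamWeight f C T :=
  calc f T ≤ f (T ∪ B) := hmono Finset.subset_union_left
    _ ≤ f B + ∑ e ∈ T, marginal f B e := hsub.union_le_add_sum_marginal B T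
    _ ≤ f B + streamWeight f C T := by
      gcongr
      exact Finset.sum_le_sum fun e he => hsub.antitone_marginal hmono e (hC e he)

end Submodular

end Marginal

namespace Submodular

section StreamOrder

variable {α R : Type*} [LinearOrder α] [AddCommGroup R] [PartialOrder R] [IsOrderedAddMonoid R]
  {f : Finset α → R} {C : α → Finset α} {S : Finset α}

theorem streamWeight_le (hsub : Submodular f) (hmono : Monotone f)
    (hC : ∀ e ∈ S, S.filter (· < e) ⊆ C e) : streamWeight f C S ≤ f S - f ∅ := by
  rw [← sum_marginal_filter_lt]
  exact Finset.sum_le_sum fun e he => hsub.antitone_marginal hmono e (hC e he)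

theorem le_streamWeight (hsub : Submodular f) (hC : ∀ e ∈ S, C e ⊆ S.filter (· < e)) :
    f S - f ∅ ≤ streamWeight f C S := by
  rw [← sum_marginal_filter_lt]
  exact Finset.sum_le_sum fun e he => hsub.marginal_le_marginal (hC e he) fun h =>
    absurd (Finset.mem_filter.1 h).2 (lt_irrefl e)

end StreamOrder

theorem mul_le_streamWeight {α R : Type*} [DecidableEq α] [Ring R] [PartialOrder R]
    [IsOrderedRing R] {f : Finset α → R} (hsub : Submodular f) (hempty : f ∅ = 0)
    {C : α → Finset α} {T : Finset α} {a : R} (ha : 0 ≤ a)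
    (hC : ∀ e ∈ T, a * f {e} ≤ marginal f (C e) e) : a * f T ≤ streamWeight f C T :=
  calc a * f T ≤ a * ∑ e ∈ T, f {e} :=
        mul_le_mul_of_nonneg_left (hsub.le_sum_singleton hempty T) ha
    _ = ∑ e ∈ T, a * f {e} := Finset.mul_sum ..
    _ ≤ streamWeight f C T := Finset.sum_le_sum hC

section Approximation

variable {α R : Type*} [LinearOrder α] [Field R] [LinearOrder R] [IsStrictOrderedRing R]
  {f : Finset α → R} {C : α → Finset α} {I K T : Finset α} {γ F c : R}

theorem le_add_one_add_one_div_mul (hsub : Submodular f) (hmono : Monotone f) (hempty : f ∅ = 0)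
    (hγ : 0 < γ) (hF : 0 ≤ F) (hCB : ∀ e, C e ⊆ (I ∪ K).filter (· < e))
    (hI : ∀ e ∈ I, I.filter (· < e) ⊆ C e)
    (hK : streamWeight f C K ≤ streamWeight f C I / γ)
    (hT : streamWeight f C T ≤ F * streamWeight f C I) :
    f T ≤ (F + 1 + 1 / γ) * f I := by
  have weight_I_le : streamWeight f C I ≤ f I := by
    simpa only [hempty, sub_zero] using hsub.streamWeight_le hmono hI
  have le_weight_B : f (I ∪ K) ≤ streamWeight f C (I ∪ K) := by
    simpa only [hempty, sub_zero] using hsub.le_streamWeight fun e _ => hCB e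
  calc f T ≤ f (I ∪ K) + streamWeight f C T :=
        hsub.le_add_streamWeight hmono fun e _ => (hCB e).trans (Finset.filter_subset _ _)
    _ ≤ streamWeight f C I + streamWeight f C K + streamWeight f C T := by
        gcongr
        exact le_weight_B.trans (streamWeight_union_le hmono C I K)
    _ ≤ streamWeight f C I + streamWeight f C I / γ + F * streamWeight f C I := by gcongr
    _ = (F + 1 + 1 / γ) * streamWeight f C I := by ring
    _ ≤ (F + 1 + 1 / γ) * f I := by gcongr

theorem le_div_one_sub_mul (hsub : Submodular f) (hmono : Monotone f) (hempty : f ∅ = 0)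
    (hF : 0 ≤ F) (hc : c < 1) (hI : ∀ e ∈ I, I.filter (· < e) ⊆ C e)
    (hT : streamWeight f C T ≤ F * streamWeight f C I)
    (hcurv : ∀ e ∈ T, (1 - c) * f {e} ≤ marginal f (C e) e) :
    f T ≤ F / (1 - c) * f I := by
  have weight_I_le : streamWeight f C I ≤ f I := by
    simpa only [hempty, sub_zero] using hsub.streamWeight_le hmono hI
  rw [div_mul_eq_mul_div, le_div_iff₀' (sub_pos.2 hc)]
  calc (1 - c) * f T ≤ streamWeight f C T :=
        hsub.mul_le_streamWeight hempty (sub_nonneg.2 hc.le) hcurv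
    _ ≤ F * streamWeight f C I := hT
    _ ≤ F * f I := by gcongr

end Approximation

end Submodular

theorem stmt_8_general {α R : Type*} [LinearOrder α] [Field R] [LinearOrder R]
    [IsStrictOrderedRing R] {f : Finset α → R} (hsub : Submodular f) (hmono : Monotone f)
    (hempty : f ∅ = 0) {C : α → Finset α} {I K T : Finset α} {γ F c : R}
    (hγ : 0 < γ) (hF : 0 ≤ F) (hc : c < 1)
    (hCB : ∀ e, C e ⊆ (I ∪ K).filter (· < e))
    (hI : ∀ e ∈ I, I.filter (· < e) ⊆ C e)
    (hK : streamWeight f C K ≤ streamWeight f C I / γ)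
    (hT : streamWeight f C T ≤ F * streamWeight f C I)
    (hcurv : ∀ (A : Finset α) (e : α), e ∉ A → (1 - c) * f {e} ≤ marginal f A e) :
    f T ≤ min (F + 1 + 1 / γ) (F / (1 - c)) * f I := by
  have nonneg_I : 0 ≤ f I := hempty ▸ hmono (Finset.empty_subset I)
  have notMem_C : ∀ e, e ∉ C e := fun e he => (Finset.mem_filter.1 (hCB e he)).2.false
  rw [min_mul_of_nonneg _ _ nonneg_I]
  exact le_min (hsub.le_add_one_add_one_div_mul hmono hempty hγ hF hCB hI hK hT)
    (hsub.le_div_one_sub_mul hmono hempty hF hc hI hT fun e _ => hcurv (C e) e (notMem_C e))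

/-- Lemma 3.4 (combinatorial form): the `f`-extension of an `F`-approximate
compliant algorithm with parameter `γ` computes a
`min{F + 1 + 1/γ, F/(1 − c)}`-approximate maximum submodular independent set,
where `c` is a curvature bound for `f`. -/
theorem stmt_8 {α : Type*} [Fintype α] [LinearOrder α]
    (f : Finset α → ℝ)
    (hsub : ∀ A B : Finset α, f (A ∪ B) + f (A ∩ B) ≤ f A + f B)
    (hmono : ∀ A B : Finset α, A ⊆ B → f A ≤ f B)
    (hproper : f ∅ = 0)
    (hnonneg : ∀ A : Finset α, 0 ≤ f A)
    (C : α → Finset α)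
    (hC : ∀ e, ∀ e' ∈ C e, e' < e)
    (I K : Finset α) (hdisj : Disjoint I K)
    (γ F c : ℝ) (hγ : 0 < γ) (hF : 0 ≤ F) (hc0 : 0 ≤ c) (hc1 : c < 1)
    (T : Finset α)
    (hCB : ∀ e : α, C e ⊆ (I ∪ K).filter (fun e' => e' < e))
    (hI : ∀ e ∈ I, I.filter (fun e' => e' < e) ⊆ C e)
    (hK : ∑ e ∈ K, (f (insert e (C e)) - f (C e))
        ≤ (∑ e ∈ I, (f (insert e (C e)) - f (C e))) / γ)
    (hT : ∑ e ∈ T, (f (insert e (C e)) - f (C e))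
        ≤ F * ∑ e ∈ I, (f (insert e (C e)) - f (C e)))
    (hcurv : ∀ (A : Finset α) (e : α), e ∉ A →
      (1 - c) * f {e} ≤ f (insert e A) - f A) :
    f T ≤ min (F + 1 + 1 / γ) (F / (1 - c)) * f I :=
  stmt_8_general hsub hmono hproper hγ hF hc1 hCB hI hK hT hcurv
end
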